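/- Let (A, {Δ(λ)}) be a split quasi-hereditary algebra over a commutative Noetherian ring R, with λ ∈ Λ maximal. Then D Hom_A(Δ(λ), A) ≅ ∇(λ), the costandard module indexed by λ. -/

import Mathlib

open scoped TensorProduct
open CategoryTheory

noncomputable section

section Core

variable (R : Type) [CommRing R] (A : Type) [Ring A] [Algebra R A]

/-- The action of `a : A` on an `A`-module as an `R`-linear endomorphism. -/
def actL (M : Type) [AddCommGroup M] [Module R M] [Module A M] [IsScalarTower R A M]
    (a : A) : M →ₗ[R] M where
  toFun m := a • m
  map_add' := smul_add a
  map_smul' r m := (smul_comm r a m).symm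

/-- The right `A`-module (i.e. `Aᵐᵒᵖ`-module) structure on the `R`-linear dual of a left
`A`-module `M`, given by `(aᵒᵖ • f) m = f (a • m)`. -/
instance dualModule (M : Type) [AddCommGroup M] [Module R M] [Module A M]
    [IsScalarTower R A M] : Module Aᵐᵒᵖ (M →ₗ[R] R) where
  smul a f := f.comp (actL R A M a.unop)
  one_smul f := by ext m; show f ((1 : Aᵐᵒᵖ).unop • m) = f m; simp
  mul_smul a b f := by
    ext m
    show f ((a * b).unop • m) = f (b.unop • a.unop • m)
    simp [mul_smul]
  smul_zero a := rfl
  smul_add a f g := rfl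
  add_smul a b f := by
    ext m
    show f ((a + b).unop • m) = f (a.unop • m) + f (b.unop • m)
    simp [add_smul]
  zero_smul f := by ext m; show f ((0 : Aᵐᵒᵖ).unop • m) = 0; simp

@[simp] lemma dualModule_smul_apply (M : Type) [AddCommGroup M] [Module R M] [Module A M]
    [IsScalarTower R A M] (a : Aᵐᵒᵖ) (f : M →ₗ[R] R) (m : M) :
    (a • f) m = f (a.unop • m) := rfl

instance dualTower (M : Type) [AddCommGroup M] [Module R M] [Module A M]
    [IsScalarTower R A M] : IsScalarTower R Aᵐᵒᵖ (M →ₗ[R] R) := by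
  constructor
  intro r a f
  ext m
  show f ((r • a).unop • m) = r • f (a.unop • m)
  rw [MulOpposite.unop_smul, smul_assoc, map_smul]

/-- The left `A`-module structure on the `R`-linear dual of a right `A`-module
(i.e. an `Aᵐᵒᵖ`-module) `M`, given by `(a • f) m = f (aᵒᵖ • m)`. -/
instance dualModule' (M : Type) [AddCommGroup M] [Module R M] [Module Aᵐᵒᵖ M]
    [IsScalarTower R Aᵐᵒᵖ M] : Module A (M →ₗ[R] R) where
  smul a f := f.comp (actL R Aᵐᵒᵖ M (MulOpposite.op a))
  one_smul f := by ext m; show f (MulOpposite.op (1 : A) • m) = f m; simp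
  mul_smul a b f := by
    ext m
    show f (MulOpposite.op (a * b) • m) = f (MulOpposite.op b • MulOpposite.op a • m)
    rw [MulOpposite.op_mul, mul_smul]
  smul_zero a := rfl
  smul_add a f g := rfl
  add_smul a b f := by
    ext m
    show f (MulOpposite.op (a + b) • m) = f (MulOpposite.op a • m) + f (MulOpposite.op b • m)
    rw [MulOpposite.op_add, add_smul, map_add]
  zero_smul f := by ext m; show f (MulOpposite.op (0 : A) • m) = 0; simp

@[simp] lemma dualModule'_smul_apply (M : Type) [AddCommGroup M] [Module R M] [Module Aᵐᵒᵖ M]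
    [IsScalarTower R Aᵐᵒᵖ M] (a : A) (f : M →ₗ[R] R) (m : M) :
    (a • f) m = f (MulOpposite.op a • m) := rfl

instance dualTower' (M : Type) [AddCommGroup M] [Module R M] [Module Aᵐᵒᵖ M]
    [IsScalarTower R Aᵐᵒᵖ M] : IsScalarTower R A (M →ₗ[R] R) := by
  constructor
  intro r a f
  ext m
  show f (MulOpposite.op (r • a) • m) = r • f (MulOpposite.op a • m)
  rw [MulOpposite.op_smul, smul_assoc, map_smul]

variable (Λ : Type) [Fintype Λ] [PartialOrder Λ]

/-- Data witnessing that `X` is isomorphic to `Δ(λ) ⊗_R U` for some `λ ∈ S` and some finitely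
generated projective `R`-module `U`. -/
structure TensorFactor (Δ : Λ → Type) [∀ l, AddCommGroup (Δ l)] [∀ l, Module R (Δ l)]
    [∀ l, Module A (Δ l)] [∀ l, IsScalarTower R A (Δ l)]
    (S : Set Λ) (X : Type) [AddCommGroup X] [Module A X] : Type 1 where
  lam : Λ
  mem : lam ∈ S
  U : ModuleCat.{0} R
  fin : Module.Finite R U
  proj : Module.Projective R U
  iso : X ≃ₗ[A] (TensorProduct R (Δ lam) U)

/-- `M` belongs to `F(Δ̃_S)`: it is a finitely generated `A`-module with a finite filtration
whose factors are of the form `Δ(λ) ⊗_R U`, `λ ∈ S`, `U` a finitely generated projective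
`R`-module. -/
def InFilt (Δ : Λ → Type) [∀ l, AddCommGroup (Δ l)] [∀ l, Module R (Δ l)]
    [∀ l, Module A (Δ l)] [∀ l, IsScalarTower R A (Δ l)]
    (S : Set Λ) (M : Type) [AddCommGroup M] [Module A M] : Prop :=
  Module.Finite A M ∧
  ∃ (n : ℕ) (c : Fin (n + 1) → Submodule A M), c 0 = ⊥ ∧ c (Fin.last n) = ⊤ ∧ Monotone c ∧
    ∀ i : Fin n, Nonempty (TensorFactor R A Λ Δ S
      (↥(c i.succ) ⧸ (Submodule.comap (c i.succ).subtype (c i.castSucc))))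

/-- Data witnessing that `X` is isomorphic to `F(λ)` for some `λ ∈ S`. -/
structure PlainFactor (F : Λ → Type) [∀ l, AddCommGroup (F l)] [∀ l, Module A (F l)]
    (S : Set Λ) (X : Type) [AddCommGroup X] [Module A X] : Type 1 where
  lam : Λ
  mem : lam ∈ S
  iso : X ≃ₗ[A] F lam

/-- `M` has a finite filtration with factors among the modules `F(λ)`, `λ ∈ S`. -/
def InFiltPlain (F : Λ → Type) [∀ l, AddCommGroup (F l)] [∀ l, Module A (F l)]
    (S : Set Λ) (M : Type) [AddCommGroup M] [Module A M] : Prop :=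
  Module.Finite A M ∧
  ∃ (n : ℕ) (c : Fin (n + 1) → Submodule A M), c 0 = ⊥ ∧ c (Fin.last n) = ⊤ ∧ Monotone c ∧
    ∀ i : Fin n, Nonempty (PlainFactor A Λ F S
      (↥(c i.succ) ⧸ (Submodule.comap (c i.succ).subtype (c i.castSucc))))

/-- `X` is a direct summand of `Y` (as `A`-modules). -/
def IsDirectSummand (X Y : Type) [AddCommGroup X] [Module A X] [AddCommGroup Y]
    [Module A Y] : Prop :=
  ∃ (i : X →ₗ[A] Y) (p : Y →ₗ[A] X), p.comp i = LinearMap.id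

/-- `X` belongs to the additive closure `add T`. -/
def InAdd (T : Type) [AddCommGroup T] [Module A T] (X : Type) [AddCommGroup X]
    [Module A X] : Prop :=
  ∃ n : ℕ, IsDirectSummand A X (Fin n → T)

/-- A split quasi-hereditary structure on the `R`-algebra `A` with standard modules
`Δ(λ)`, `λ ∈ Λ` (following Rouquier's module-theoretic definition). -/
structure SplitQH (Δ : Λ → Type) [∀ l, AddCommGroup (Δ l)] [∀ l, Module R (Δ l)]
    [∀ l, Module A (Δ l)] [∀ l, IsScalarTower R A (Δ l)] : Type 1 where
  algFin : Module.Finite R A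
  algProj : Module.Projective R A
  deltaFinA : ∀ l, Module.Finite A (Δ l)
  deltaFinR : ∀ l, Module.Finite R (Δ l)
  deltaProjR : ∀ l, Module.Projective R (Δ l)
  hom_le : ∀ l m : Λ, (∃ f : Δ l →ₗ[A] Δ m, f ≠ 0) → l ≤ m
  endIso : ∀ l, Nonempty ((Module.End A (Δ l)) ≃ₐ[R] R)
  P : Λ → ModuleCat.{0} A
  P_proj : ∀ l, Module.Projective A (P l)
  P_fin : ∀ l, Module.Finite A (P l)
  epi : ∀ l, (P l : Type) →ₗ[A] Δ l
  epi_surj : ∀ l, Function.Surjective (epi l)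
  ker_filt : ∀ l, InFilt R A Λ Δ {m | l < m} ↥(LinearMap.ker (epi l))
  add_gen : ∀ (Q : ModuleCat.{0} A), Module.Finite A Q → Module.Projective A Q →
    InAdd A (∀ l, (P l : Type)) Q

/-- Vanishing of `Ext^i_A(M, N)` (computed in the abelian category of `A`-modules). -/
def extVanish (M : Type) [AddCommGroup M] [Module A M] (N : Type) [AddCommGroup N]
    [Module A N] (i : ℕ) : Prop :=
  Subsingleton (((Ext ℤ (ModuleCat.{0} A) i).obj
    (Opposite.op (ModuleCat.of A M))).obj (ModuleCat.of A N))

/-- `∇` is a family of costandard modules for the split quasi-hereditary algebra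
`(A, {Δ(λ)})`: the `R`-linear duals `D∇(λ)` make `A^op` split quasi-hereditary (with the same
poset), and the `Ext`-orthogonality relations with the standard modules hold. -/
def IsCostandard (Δ : Λ → Type) [∀ l, AddCommGroup (Δ l)] [∀ l, Module R (Δ l)]
    [∀ l, Module A (Δ l)] [∀ l, IsScalarTower R A (Δ l)]
    (N : Λ → Type) [∀ l, AddCommGroup (N l)] [∀ l, Module R (N l)]
    [∀ l, Module A (N l)] [∀ l, IsScalarTower R A (N l)] : Prop :=
  Nonempty (SplitQH R Aᵐᵒᵖ Λ (fun l => (N l →ₗ[R] R))) ∧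
  (∀ l, Nonempty ((Δ l →ₗ[A] N l) ≃ₗ[R] R)) ∧
  (∀ l m, l ≠ m → ∀ f : Δ l →ₗ[A] N m, f = 0) ∧
  (∀ l m : Λ, ∀ i : ℕ, 0 < i → extVanish A (Δ l) (N m) i)

/-- A bundled family of costandard modules. -/
structure CostandardFamily (Δ : Λ → Type) [∀ l, AddCommGroup (Δ l)] [∀ l, Module R (Δ l)]
    [∀ l, Module A (Δ l)] [∀ l, IsScalarTower R A (Δ l)] : Type 1 where
  Nab : Λ → Type
  [acg : ∀ l, AddCommGroup (Nab l)]
  [modR : ∀ l, Module R (Nab l)]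
  [modA : ∀ l, Module A (Nab l)]
  [tower : ∀ l, IsScalarTower R A (Nab l)]
  cost : IsCostandard R A Λ Δ Nab

attribute [instance] CostandardFamily.acg CostandardFamily.modR CostandardFamily.modA
  CostandardFamily.tower

/-- `T` is a family of (partial) tilting modules forming a characteristic tilting module
`⊕ T(λ)`: each `T(λ)` admits an exact sequence `0 → Δ(λ) → T(λ) → X(λ) → 0` with
`X(λ) ∈ F(Δ̃_{μ<λ})` and an exact sequence `0 → Y(λ) → T(λ) → ∇(λ) → 0` with
`Y(λ) ∈ F(∇̃_{μ<λ})`. -/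
def IsCharTilting (Δ : Λ → Type) [∀ l, AddCommGroup (Δ l)] [∀ l, Module R (Δ l)]
    [∀ l, Module A (Δ l)] [∀ l, IsScalarTower R A (Δ l)]
    (N : Λ → Type) [∀ l, AddCommGroup (N l)] [∀ l, Module R (N l)]
    [∀ l, Module A (N l)] [∀ l, IsScalarTower R A (N l)]
    (T : Λ → Type) [∀ l, AddCommGroup (T l)] [∀ l, Module A (T l)] : Prop :=
  ∀ l : Λ,
    (∃ f : Δ l →ₗ[A] T l, Function.Injective f ∧
      InFilt R A Λ Δ {m | m < l} ((T l) ⧸ LinearMap.range f)) ∧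
    (∃ g : T l →ₗ[A] N l, Function.Surjective g ∧
      InFilt R A Λ N {m | m < l} ↥(LinearMap.ker g))

end Core

end

noncomputable section

/-!
As `λ` is maximal, `Δ(λ)` is projective, so that `F = Hom_A(Δ(λ), −)`, with values in modules over
`E = End_A(Δ(λ))ᵒᵖ`, is exact. Consider the modules `X` with `Ext¹(X, ∇(λ)) = 0` for which `F`
induces a bijection `Hom_A(X, ∇(λ)) → Hom_E(F X, F ∇(λ))`. They are closed under extensions and
direct summands. The class contains `Δ(λ)`, because `F Δ(λ) = E` is free of rank one, and `Δ(μ)`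
for `μ ≠ λ`, because then both sides vanish; hence it contains every finitely generated projective
module, in particular `A`. For `X = A` the left-hand side is `∇(λ)`, and the right-hand side is
`D Hom_A(Δ(λ), A)` since `E` consists of scalars and `F ∇(λ) ≅ R`.
-/

universe w v v' u u'

section Devissage

open CategoryTheory.Limits

variable {C : Type u} [Category.{v} C] {D : Type u'} [Category.{v'} D] {F : C ⥤ D} {N : C}

lemma map_bijective_of_retract {X Y : C} (r : Retract X Y)
    (hY : Function.Bijective (F.map : (Y ⟶ N) → _)) :
    Function.Bijective (F.map : (X ⟶ N) → _) := by
  refine ⟨fun f g hfg => ?_, fun φ => ?_⟩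
  · have : r.r ≫ f = r.r ≫ g := hY.1 (by rw [F.map_comp, F.map_comp, hfg])
    rw [← Category.id_comp f, ← r.retract, Category.assoc, this, r.retract_assoc]
  · obtain ⟨g, hg⟩ := hY.2 (F.map r.r ≫ φ)
    exact ⟨r.i ≫ g, by
      rw [F.map_comp, hg, ← F.map_comp_assoc, r.retract, F.map_id, Category.id_comp]⟩

variable [Abelian C] [Preadditive D]

lemma map_injective_of_shortExact [F.Additive] [F.PreservesEpimorphisms] {S : ShortComplex C}
    (hS : S.ShortExact) (h₁ : Function.Injective (F.map : (S.X₁ ⟶ N) → _))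
    (h₃ : Function.Injective (F.map : (S.X₃ ⟶ N) → _)) :
    Function.Injective (F.map : (S.X₂ ⟶ N) → _) := by
  have := hS.epi_g
  refine (injective_iff_map_eq_zero (F.mapAddHom : (S.X₂ ⟶ N) →+ _)).2 fun g hg => ?_
  rw [Functor.coe_mapAddHom] at hg
  have hfg : S.f ≫ g = 0 := h₁ (by rw [F.map_comp, hg, comp_zero, F.map_zero])
  obtain ⟨g, rfl⟩ : ∃ g' : S.X₃ ⟶ N, S.g ≫ g' = g := ⟨hS.exact.desc g hfg, hS.exact.g_desc g hfg⟩
  have hFg : F.map g = F.map 0 := by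
    rw [← cancel_epi (F.map S.g), ← F.map_comp, hg, F.map_zero, comp_zero]
  rw [h₃ hFg, comp_zero]

lemma exists_map_g_comp_eq [F.PreservesZeroMorphisms] [PreservesFiniteColimits F]
    {S : ShortComplex C} (hS : S.Exact) [Epi S.g] {Y : D} (φ : F.obj S.X₂ ⟶ Y)
    (hφ : F.map S.f ≫ φ = 0) : ∃ ψ : F.obj S.X₃ ⟶ Y, F.map S.g ≫ ψ = φ := by
  have hcokernel := CokernelCofork.mapIsColimit _ hS.gIsCokernel F
  obtain ⟨ψ, hψ⟩ := CokernelCofork.IsColimit.desc' hcokernel φ hφ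
  exact ⟨ψ, hψ⟩

lemma map_surjective_of_shortExact [F.Additive] [PreservesFiniteColimits F]
    {S : ShortComplex C} (hS : S.ShortExact)
    (hext : ∀ g : S.X₁ ⟶ N, ∃ h : S.X₂ ⟶ N, S.f ≫ h = g)
    (h₁ : Function.Surjective (F.map : (S.X₁ ⟶ N) → _))
    (h₃ : Function.Surjective (F.map : (S.X₃ ⟶ N) → _)) :
    Function.Surjective (F.map : (S.X₂ ⟶ N) → _) := by
  have := hS.epi_g
  intro φ
  obtain ⟨g, hg⟩ := h₁ (F.map S.f ≫ φ)
  obtain ⟨h, rfl⟩ := hext g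
  obtain ⟨ψ, hψ⟩ := exists_map_g_comp_eq hS.exact (φ - F.map h) (by
    rw [Preadditive.comp_sub, sub_eq_zero, ← hg, F.map_comp])
  obtain ⟨k, rfl⟩ := h₃ ψ
  exact ⟨h + S.g ≫ k, by rw [F.map_add, F.map_comp, hψ, add_sub_cancel]⟩

section Ext

variable [HasExt.{w} C]

lemma subsingleton_ext_of_retract {X Y : C} {n : ℕ} (r : Retract X Y)
    (h : Subsingleton (Abelian.Ext Y N n)) : Subsingleton (Abelian.Ext X N n) := by
  refine subsingleton_of_forall_eq 0 fun x => ?_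
  rw [← Abelian.Ext.mk₀_id_comp x, ← r.retract, ← Abelian.Ext.mk₀_comp_mk₀_assoc,
    Subsingleton.elim ((Abelian.Ext.mk₀ r.r).comp x (zero_add n)) 0, Abelian.Ext.comp_zero]

lemma subsingleton_ext_of_shortExact {S : ShortComplex C} (hS : S.ShortExact) {n : ℕ}
    (h₁ : Subsingleton (Abelian.Ext S.X₁ N n)) (h₃ : Subsingleton (Abelian.Ext S.X₃ N n)) :
    Subsingleton (Abelian.Ext S.X₂ N n) := by
  refine subsingleton_of_forall_eq 0 fun x => ?_
  obtain ⟨y, rfl⟩ := Abelian.Ext.contravariant_sequence_exact₂ hS N x (Subsingleton.elim _ _)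
  rw [Subsingleton.elim y 0, Abelian.Ext.comp_zero]

lemma exists_f_comp_eq_of_subsingleton_ext {S : ShortComplex C} (hS : S.ShortExact)
    (h₃ : Subsingleton (Abelian.Ext S.X₃ N 1)) (g : S.X₁ ⟶ N) : ∃ h : S.X₂ ⟶ N, S.f ≫ h = g := by
  obtain ⟨x, hx⟩ := Abelian.Ext.contravariant_sequence_exact₁ hS N (Abelian.Ext.mk₀ g) (add_zero 1)
    (Subsingleton.elim _ _)
  obtain ⟨h, rfl⟩ := (Abelian.Ext.mk₀_bijective S.X₂ N).2 x
  exact ⟨h, (Abelian.Ext.mk₀_bijective S.X₁ N).1 (by rw [← hx, Abelian.Ext.mk₀_comp_mk₀])⟩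

variable (F N) in
/-- The objects `X` without nontrivial extensions by `N` for which `F` induces a bijection
`Hom(X, N) ≃ Hom(F X, F N)`. The condition on `Ext¹` is what makes this class closed under
extensions. -/
def extAcyclicMapBijective : ObjectProperty C := fun X =>
  Subsingleton (Abelian.Ext X N 1) ∧ Function.Bijective (F.map : (X ⟶ N) → _)

instance : (extAcyclicMapBijective F N).IsStableUnderRetracts where
  of_retract r hY := ⟨subsingleton_ext_of_retract r hY.1, map_bijective_of_retract r hY.2⟩

instance [F.Additive] [PreservesFiniteColimits F] :
    (extAcyclicMapBijective F N).IsClosedUnderExtensions where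
  prop_X₂_of_shortExact hS h₁ h₃ := ⟨subsingleton_ext_of_shortExact hS h₁.1 h₃.1,
    map_injective_of_shortExact hS h₁.2.1 h₃.2.1,
    map_surjective_of_shortExact hS (exists_f_comp_eq_of_subsingleton_ext hS h₃.1) h₁.2.2 h₃.2.2⟩

end Ext

lemma subsingleton_abelianExt_succ {k : Type*} [Ring k] [Linear k C] [EnoughProjectives C]
    [HasExt.{w} C] {X Y : C} {n : ℕ}
    (h : Subsingleton (((Ext k C (n + 1)).obj (Opposite.op X)).obj Y)) :
    Subsingleton (Abelian.Ext X Y (n + 1)) := by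
  let P := ProjectiveResolution.of X
  have hexact : (P.complex.linearYonedaObj k Y).ExactAt (n + 1) :=
    (HomologicalComplex.exactAt_iff_isZero_homology _ _).2 <|
      (ModuleCat.isZero_of_subsingleton _).of_iso (P.isoExt (n + 1) Y).symm
  rw [HomologicalComplex.exactAt_iff' _ n (n + 1) (n + 2) (by simp) (by simp),
    ShortComplex.moduleCat_exact_iff] at hexact
  refine subsingleton_of_forall_eq 0 fun x => ?_
  obtain ⟨f, hf, rfl⟩ := P.extMk_surjective x (n + 2) rfl
  exact (P.extMk_eq_zero_iff f _ rfl hf n rfl).2 (hexact f hf)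

lemma preadditiveCoyonedaObj_map_bijective {C : Type u} [Category.{v} C] [Preadditive C] (X Y : C) :
    Function.Bijective ((preadditiveCoyonedaObj X).map : (X ⟶ Y) → _) := by
  refine ⟨fun f g hfg => ?_, fun φ => ⟨φ.hom (𝟙 X), ModuleCat.hom_ext <|
    LinearMap.ext fun (f : X ⟶ X) => ?_⟩⟩
  · have : 𝟙 X ≫ f = 𝟙 X ≫ g := congr(($hfg).hom (𝟙 X))
    rwa [Category.id_comp, Category.id_comp] at this
  · exact (φ.hom.map_smul (MulOpposite.op (End.of f)) (𝟙 X)).symm.trans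
      (congrArg φ.hom (Category.comp_id f))

section ClosureProperties

variable {P : ObjectProperty C} [P.IsClosedUnderExtensions]

instance [P.IsClosedUnderIsomorphisms] : P.IsClosedUnderBinaryProducts where
  limitsOfShape_le := by
    rintro X ⟨p⟩
    refine P.prop_of_iso ?_
      (P.prop_biprod (p.prop_diag_obj (.mk .left)) (p.prop_diag_obj (.mk .right)))
    exact IsLimit.conePointUniqueUpToIso (BinaryBiproduct.isLimit _ _)
      ((IsLimit.postcomposeHomEquiv (diagramIsoPair p.diag) _).2 p.isLimit)

instance [P.IsClosedUnderIsomorphisms] [P.ContainsZero] : P.IsClosedUnderFiniteProducts := .mk'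

end ClosureProperties

end Devissage

section ModuleProperties

variable {R : Type u'} [CommRing R] {A : Type u} [Ring A] [Algebra R A]
  {P : ObjectProperty (ModuleCat.{v} A)}

lemma prop_of_exact [P.IsClosedUnderExtensions] {M' M M'' : Type v} [AddCommGroup M']
    [AddCommGroup M] [AddCommGroup M''] [Module A M'] [Module A M] [Module A M'']
    {f : M' →ₗ[A] M} {g : M →ₗ[A] M''} (hfg : Function.Exact f g) (hf : Function.Injective f)
    (hg : Function.Surjective g) (h' : P (.of A M')) (h'' : P (.of A M'')) : P (.of A M) :=
  P.prop_X₂_of_shortExact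
    (ModuleCat.shortComplex_shortExact (ModuleCat.shortComplexOfCompEqZero f g
      hfg.linearMap_comp_eq_zero) hfg hf hg) h' h''

lemma prop_of_comp_eq_id [P.IsStableUnderRetracts] {M M' : Type v} [AddCommGroup M]
    [AddCommGroup M'] [Module A M] [Module A M'] {i : M →ₗ[A] M'} {r : M' →ₗ[A] M}
    (hri : r ∘ₗ i = LinearMap.id) (h : P (.of A M')) : P (.of A M) :=
  P.prop_of_retract ⟨ModuleCat.ofHom i, ModuleCat.ofHom r, ModuleCat.hom_ext hri⟩ h

lemma prop_of_linearEquiv [P.IsClosedUnderIsomorphisms] {M M' : Type v} [AddCommGroup M]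
    [AddCommGroup M'] [Module A M] [Module A M'] (e : M ≃ₗ[A] M') (h : P (.of A M)) :
    P (.of A M') :=
  P.prop_of_iso e.toModuleIso h

lemma prop_pi {P : ObjectProperty (ModuleCat.{max v' v} A)} [P.IsClosedUnderFiniteProducts]
    {ι : Type v'} [Finite ι] {M : ι → Type (max v' v)} [∀ i, AddCommGroup (M i)]
    [∀ i, Module A (M i)] (h : ∀ i, P (.of A (M i))) : P (.of A (∀ i, M i)) :=
  P.prop_of_isLimit_fan (ModuleCat.productConeIsLimit fun i => .of A (M i)) h

open TensorProduct.AlgebraTensorModule in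
lemma prop_tensorProduct [P.IsClosedUnderFiniteProducts] [P.IsStableUnderRetracts] {M U : Type v}
    [AddCommGroup M] [Module R M] [Module A M] [IsScalarTower R A M] [AddCommGroup U] [Module R U]
    [Module.Finite R U] [Module.Projective R U] (h : P (.of A M)) : P (.of A (M ⊗[R] U)) := by
  obtain ⟨n, f, g, -, -, hfg⟩ := Module.Finite.exists_comp_eq_id_of_projective R U
  let e : M ⊗[R] (Fin n → R) ≃ₗ[A] (Fin n → M) :=
    congr (.refl A M) (Finsupp.linearEquivFunOnFinite R R (Fin n)).symm ≪≫ₗ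
      TensorProduct.finsuppScalarRight R A M (Fin n) ≪≫ₗ Finsupp.linearEquivFunOnFinite A M (Fin n)
  refine prop_of_comp_eq_id (i := e.toLinearMap ∘ₗ lTensor A M g)
    (r := lTensor A M f ∘ₗ e.symm.toLinearMap) ?_ (prop_pi fun _ => h)
  rw [LinearMap.comp_assoc, ← LinearMap.comp_assoc _ _ e.symm.toLinearMap, e.symm_comp,
    LinearMap.id_comp, ← lTensor_comp, hfg, lTensor_id]

end ModuleProperties

section SplitQuasiHereditary

variable {R : Type} [CommRing R] {A : Type} [Ring A] [Algebra R A] {Λ : Type} {Δ : Λ → Type}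
  [∀ l, AddCommGroup (Δ l)] [∀ l, Module R (Δ l)] [∀ l, Module A (Δ l)]
  [∀ l, IsScalarTower R A (Δ l)]

lemma InFilt.subsingleton {M : Type} [AddCommGroup M] [Module A M]
    (hM : InFilt R A Λ Δ ∅ M) : Subsingleton M := by
  obtain ⟨-, n, c, hbot, htop, -, hfactor⟩ := hM
  cases n with
  | zero => exact (Submodule.subsingleton_iff A).1 (subsingleton_of_bot_eq_top (hbot ▸ htop))
  | succ n =>
    obtain ⟨X⟩ := hfactor 0
    exact X.mem.elim

variable {P : ObjectProperty (ModuleCat.{0} A)} [P.IsClosedUnderExtensions]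
  [P.IsStableUnderRetracts] [P.ContainsZero]

lemma InFilt.prop {S : Set Λ} {M : Type} [AddCommGroup M] [Module A M]
    (hM : InFilt R A Λ Δ S M) (hΔ : ∀ l ∈ S, P (.of A (Δ l))) : P (.of A M) := by
  obtain ⟨-, n, c, hbot, htop, hmono, hfactor⟩ := hM
  suffices h : ∀ k, P (.of A (c k)) from
    prop_of_linearEquiv (Submodule.topEquiv (R := A)) (htop ▸ h (Fin.last n))
  intro k
  induction k using Fin.induction with
  | zero => exact hbot ▸ P.prop_of_isZero (ModuleCat.isZero_of_subsingleton _)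
  | succ k ih =>
    obtain ⟨X⟩ := hfactor k
    have := X.fin
    have := X.proj
    have hle : c k.castSucc ≤ c k.succ := hmono (Fin.castSucc_lt_succ).le
    have hexact : Function.Exact (Submodule.inclusion hle)
        ((c k.castSucc).comap (c k.succ).subtype).mkQ := by
      rw [LinearMap.exact_iff, Submodule.ker_mkQ, Submodule.range_inclusion]
    exact prop_of_exact hexact (Submodule.inclusion_injective hle) (Submodule.mkQ_surjective _) ih
      (prop_of_linearEquiv X.iso.symm (prop_tensorProduct (hΔ X.lam X.mem)))

namespace SplitQH

variable [PartialOrder Λ]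

lemma prop_of_projective [Finite Λ] (h : SplitQH R A Λ Δ) (hΔ : ∀ l, P (.of A (Δ l)))
    (Q : ModuleCat.{0} A) [hfin : Module.Finite A Q] [hproj : Module.Projective A Q] : P Q := by
  have hP (l : Λ) : P (.of A (h.P l)) :=
    prop_of_exact (LinearMap.exact_subtype_ker_map (h.epi l)) Subtype.val_injective
      (h.epi_surj l) ((h.ker_filt l).prop fun m _ => hΔ m) (hΔ l)
  obtain ⟨n, i, r, hri⟩ := h.add_gen Q hfin hproj
  exact prop_of_comp_eq_id hri (prop_pi fun _ : Fin n => prop_pi hP)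

lemma projective_of_isMax (h : SplitQH R A Λ Δ) {l : Λ} (hl : IsMax l) :
    Module.Projective A (Δ l) := by
  have hfilt : InFilt R A Λ Δ (Set.Ioi l) (LinearMap.ker (h.epi l)) := h.ker_filt l
  rw [hl.Ioi_eq] at hfilt
  have hker : LinearMap.ker (h.epi l) = ⊥ := Submodule.subsingleton_iff_eq_bot.1 hfilt.subsingleton
  have := h.P_proj l
  exact .of_equiv (.ofBijective (h.epi l) ⟨LinearMap.ker_eq_bot.1 hker, h.epi_surj l⟩)

lemma algebraMap_end_surjective (h : SplitQH R A Λ Δ) (l : Λ) :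
    Function.Surjective (algebraMap R (Module.End A (Δ l))) := fun f => by
  obtain ⟨e⟩ := h.endIso l
  exact ⟨e f, e.injective (e.commutes (e f))⟩

end SplitQH

end SplitQuasiHereditary

section DualEvaluation

variable {R : Type} [CommRing R] {A : Type} [Ring A] [Algebra R A] {D N : Type} [AddCommGroup D]
  [Module A D] [AddCommGroup N] [Module R N] [Module A N] [IsScalarTower R A N]

/-- The `A`-linear map `N → D Hom_A(D, A)` obtained by composing the pairing
`N × Hom_A(D, A) → Hom_A(D, N)`, `(x, f) ↦ (d ↦ f d • x)`, with a linear form `θ`. -/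
def evalDual (θ : (D →ₗ[A] N) →ₗ[R] R) : N →ₗ[A] ((D →ₗ[A] A) →ₗ[R] R) where
  toFun x :=
    { toFun f := θ (LinearMap.toSpanSingleton A N x ∘ₗ f)
      map_add' f g := by rw [LinearMap.comp_add, map_add]
      map_smul' r f := by rw [LinearMap.comp_smul, map_smul, RingHom.id_apply] }
  map_add' x y := by
    ext f
    simp [LinearMap.toSpanSingleton_add, LinearMap.add_comp]
  map_smul' a x := by
    ext f
    refine congrArg θ (LinearMap.ext fun d => ?_)
    exact (mul_smul (f d) a x).symm

lemma evalDual_apply (θ : (D →ₗ[A] N) →ₗ[R] R) (x : N) (f : D →ₗ[A] A) :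
    evalDual θ x f = θ (LinearMap.toSpanSingleton A N x ∘ₗ f) := rfl

lemma evalDual_injective {θ : (D →ₗ[A] N) →ₗ[R] R} (hθ : Function.Injective θ)
    (hinj : Function.Injective ((preadditiveCoyonedaObj (ModuleCat.of A D)).map :
      (ModuleCat.of A A ⟶ .of A N) → _)) :
    Function.Injective (evalDual θ) := by
  refine (injective_iff_map_eq_zero _).2 fun x hx => ?_
  have hcomp (f : D →ₗ[A] A) : LinearMap.toSpanSingleton A N x ∘ₗ f = 0 :=
    (map_eq_zero_iff θ hθ).1 (LinearMap.congr_fun hx f)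
  have hzero : ModuleCat.ofHom (LinearMap.toSpanSingleton A N x) = 0 :=
    hinj <| ModuleCat.hom_ext <| LinearMap.ext fun (f : ModuleCat.of A D ⟶ .of A A) =>
      ModuleCat.hom_ext (hcomp f.hom)
  have hone : LinearMap.toSpanSingleton A N x 1 = 0 := congr(($hzero).hom 1)
  rwa [LinearMap.toSpanSingleton_apply_one] at hone

lemma comp_algebraMap_end [Module R D] [IsScalarTower R A D] (k : D →ₗ[A] N) (r : R) :
    k ∘ₗ algebraMap R (Module.End A D) r = r • k :=
  LinearMap.ext fun d => k.map_smul_of_tower r d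

lemma evalDual_surjective [Module R D] [IsScalarTower R A D] (θ : (D →ₗ[A] N) ≃ₗ[R] R)
    (hend : Function.Surjective (algebraMap R (Module.End A D)))
    (hsurj : Function.Surjective ((preadditiveCoyonedaObj (ModuleCat.of A D)).map :
      (ModuleCat.of A A ⟶ .of A N) → _)) :
    Function.Surjective (evalDual θ.toLinearMap) := by
  intro φ
  let ψ : (ModuleCat.of A D ⟶ .of A A) →ₗ[(End (ModuleCat.of A D))ᵐᵒᵖ]
      (ModuleCat.of A D ⟶ .of A N) :=
    { toFun f := ModuleCat.ofHom (θ.symm (φ f.hom))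
      map_add' f g := by simp
      map_smul' e f := by
        obtain ⟨r, hr⟩ := hend e.unop.hom
        refine ModuleCat.hom_ext ?_
        calc θ.symm (φ (f.hom ∘ₗ e.unop.hom)) = r • θ.symm (φ f.hom) := by
              rw [← hr, comp_algebraMap_end, map_smul, map_smul]
          _ = θ.symm (φ f.hom) ∘ₗ e.unop.hom := by rw [← hr, comp_algebraMap_end] }
  obtain ⟨g, hg⟩ := hsurj (ModuleCat.ofHom ψ)
  have hθg (f : D →ₗ[A] A) : θ (g.hom ∘ₗ f) = φ f :=
    θ.eq_symm_apply.1 congr((($hg).hom (ModuleCat.ofHom f)).hom)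
  have hspan : LinearMap.toSpanSingleton A N (g.hom 1) = g.hom := LinearMap.ext_ring (one_smul A _)
  refine ⟨g.hom 1, LinearMap.ext fun f => ?_⟩
  rw [evalDual_apply, hspan, LinearEquiv.coe_coe, hθg]

end DualEvaluation

section Costandard

variable {R : Type} [CommRing R] {A : Type} [Ring A] [Algebra R A] {Λ : Type} [PartialOrder Λ]
  {Δ : Λ → Type} [∀ l, AddCommGroup (Δ l)] [∀ l, Module R (Δ l)] [∀ l, Module A (Δ l)]
  [∀ l, IsScalarTower R A (Δ l)] {N : Type} [AddCommGroup N] [Module A N] {l : Λ}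

lemma SplitQH.extAcyclicMapBijective_of_isMax (h : SplitQH R A Λ Δ) (hl : IsMax l)
    (hhom : ∀ m ≠ l, ∀ f : Δ m →ₗ[A] N, f = 0) (hext : ∀ m, extVanish A (Δ m) N 1) (m : Λ) :
    extAcyclicMapBijective (preadditiveCoyonedaObj (ModuleCat.of A (Δ l))) (ModuleCat.of A N)
      (.of A (Δ m)) := by
  refine ⟨subsingleton_abelianExt_succ (hext m), ?_⟩
  obtain rfl | hm := eq_or_ne m l
  · exact preadditiveCoyonedaObj_map_bijective _ _
  · have hN (f : ModuleCat.of A (Δ m) ⟶ .of A N) : f = 0 := ModuleCat.hom_ext (hhom m hm f.hom)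
    have hΔ (f : Δ l →ₗ[A] Δ m) : f = 0 := by
      by_contra hf
      exact hm (hl.eq_of_ge (h.hom_le l m ⟨f, hf⟩))
    have : Subsingleton ((preadditiveCoyonedaObj (ModuleCat.of A (Δ l))).obj (.of A (Δ m))) :=
      subsingleton_of_forall_eq 0 fun (f : ModuleCat.of A (Δ l) ⟶ .of A (Δ m)) =>
        ModuleCat.hom_ext (hΔ f.hom)
    refine ⟨fun f g _ => (hN f).trans (hN g).symm, fun φ => ⟨0, ?_⟩⟩
    exact (ModuleCat.isZero_of_subsingleton _).eq_of_src _ _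

theorem dual_hom_delta_iso_costandard_general [Finite Λ] [Module R N] [IsScalarTower R A N]
    (h : SplitQH R A Λ Δ) (hl : IsMax l) (hθ : Nonempty ((Δ l →ₗ[A] N) ≃ₗ[R] R))
    (hhom : ∀ m ≠ l, ∀ f : Δ m →ₗ[A] N, f = 0) (hext : ∀ m, extVanish A (Δ m) N 1) :
    Nonempty (((Δ l →ₗ[A] A) →ₗ[R] R) ≃ₗ[A] N) := by
  obtain ⟨θ⟩ := hθ
  have : Projective (ModuleCat.of A (Δ l)) :=
    (IsProjective.iff_projective (Δ l)).1 (h.projective_of_isMax hl)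
  let P := extAcyclicMapBijective (preadditiveCoyonedaObj (ModuleCat.of A (Δ l)))
    (ModuleCat.of A N)
  have hΔ : ∀ m, P (.of A (Δ m)) := h.extAcyclicMapBijective_of_isMax hl hhom hext
  have : P.Nonempty := P.nonempty_of_prop (hΔ l)
  obtain ⟨-, hinj, hsurj⟩ : P (.of A A) := h.prop_of_projective hΔ (.of A A)
  exact ⟨(LinearEquiv.ofBijective (evalDual θ.toLinearMap)
    ⟨evalDual_injective θ.injective hinj,
      evalDual_surjective θ (h.algebraMap_end_surjective l) hsurj⟩).symm⟩

end Costandard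

/-- If `λ ∈ Λ` is maximal, then `D Hom_A(Δ(λ), A) ≅ ∇(λ)` as `A`-modules,
where `Hom_A(Δ(λ), A)` is a right `A`-module and `D = Hom_R(−, R)`. -/
theorem dual_hom_delta_iso_costandard
    (R : Type) [CommRing R] [IsNoetherianRing R]
    (A : Type) [Ring A] [Algebra R A]
    (Λ : Type) [Fintype Λ] [PartialOrder Λ]
    (Δ : Λ → Type) [∀ l, AddCommGroup (Δ l)] [∀ l, Module R (Δ l)]
    [∀ l, Module A (Δ l)] [∀ l, IsScalarTower R A (Δ l)]
    (Nb : Λ → Type) [∀ l, AddCommGroup (Nb l)] [∀ l, Module R (Nb l)]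
    [∀ l, Module A (Nb l)] [∀ l, IsScalarTower R A (Nb l)]
    (h : SplitQH R A Λ Δ) (hc : IsCostandard R A Λ Δ Nb)
    (l : Λ) (hmax : ∀ m : Λ, l ≤ m → m = l) :
    Nonempty ((((Δ l →ₗ[A] A) →ₗ[R] R)) ≃ₗ[A] Nb l) := by
  exact dual_hom_delta_iso_costandard_general h (fun m hm => (hmax m hm).le) (hc.2.1 l)
    (fun m hm => hc.2.2.1 m l hm) fun m => hc.2.2.2 m l 1 one_pos

end
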